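/- Let d ≥ 1 be an integer, p ∈ (1,∞), 0 < μ ≤ d/p, R ∈ (0,∞). There is a constant N = N(d,p,μ) such that for every function u that is twice continuously differentiable on B̄_R and every ε ∈ (0,1]: ‖Du‖_{E_{p,μ}(B_R)} ≤ N ε R ‖D²u‖_{E_{p,μ}(B_R)} + N ε^{−1} R^{−1} ‖u‖_{E_{p,μ}(B_R)}. -/

import Mathlib

open MeasureTheory Metric Set Filter
open scoped ENNReal RealInnerProductSpace

noncomputable section

/-- Euclidean space `ℝ^d`. -/
abbrev E (d : ℕ) : Type := EuclideanSpace ℝ (Fin d)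

/-- Frobenius norm of a `d × d` matrix. -/
def frob {d : ℕ} (m : Matrix (Fin d) (Fin d) ℝ) : ℝ :=
  Real.sqrt (∑ i, ∑ j, (m i j) ^ 2)

/-- `F` is `δ`-elliptic: `δ tr w ≤ F (m + w) - F m ≤ δ⁻¹ tr w` for symmetric `m` and
symmetric positive semidefinite `w`. -/
def Elliptic {d : ℕ} (δ : ℝ) (F : Matrix (Fin d) (Fin d) ℝ → ℝ) : Prop :=
  ∀ m : Matrix (Fin d) (Fin d) ℝ, m.IsSymm →
    ∀ w : Matrix (Fin d) (Fin d) ℝ, w.PosSemidef →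
      δ * w.trace ≤ F (m + w) - F m ∧ F (m + w) - F m ≤ δ⁻¹ * w.trace

/-- Gradient of `u : ℝ^d → ℝ` as a vector in `ℝ^d`. -/
def grad {d : ℕ} (u : E d → ℝ) (x : E d) : E d :=
  (EuclideanSpace.equiv (Fin d) ℝ).symm fun i => fderiv ℝ u x (EuclideanSpace.single i 1)

/-- Hessian matrix of `u : ℝ^d → ℝ`. -/
def hess {d : ℕ} (u : E d → ℝ) (x : E d) : Matrix (Fin d) (Fin d) ℝ :=
  Matrix.of fun i j =>
    fderiv ℝ (fun y => fderiv ℝ u y (EuclideanSpace.single j 1)) x (EuclideanSpace.single i 1)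

/-- Normalized `L_p` norm `(⨍_B |g|^p)^{1/p}` (average over `B`). -/
def nLp {d : ℕ} (p : ℝ) (B : Set (E d)) (g : E d → ℝ) : ℝ≥0∞ :=
  ((volume B)⁻¹ * ∫⁻ y in B, ENNReal.ofReal (|g y| ^ p)) ^ (1 / p)

/-- Unnormalized `L_p` norm `(∫_A |g|^p)^{1/p}`. -/
def Lpn {d : ℕ} (p : ℝ) (A : Set (E d)) (g : E d → ℝ) : ℝ≥0∞ :=
  (∫⁻ y in A, ENNReal.ofReal (|g y| ^ p)) ^ (1 / p)

/-- Morrey norm `‖g‖_{E_{p,μ}(Ω)} = sup_{ρ>0, x∈Ω} ρ^μ (⨍_{B_ρ(x)} |g 1_Ω|^p)^{1/p}`. -/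
def morrey {d : ℕ} (p μ : ℝ) (Ω : Set (E d)) (g : E d → ℝ) : ℝ≥0∞ :=
  ⨆ (ρ : ℝ) (_ : 0 < ρ) (x : E d) (_ : x ∈ Ω),
    ENNReal.ofReal (ρ ^ μ) * nLp p (ball x ρ) (Ω.indicator g)

/-- The `(θ, R₀)`-oscillation condition on `F(m, x)`. -/
def OscCond {d : ℕ} (δ θ R₀ : ℝ) (F : Matrix (Fin d) (Fin d) ℝ → E d → ℝ) : Prop :=
  ∀ r ∈ Set.Ioc (0 : ℝ) R₀, ∀ z : E d,
    ∃ Fb : Matrix (Fin d) (Fin d) ℝ → ℝ,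
      ConvexOn ℝ Set.univ Fb ∧ Elliptic δ Fb ∧ Fb 0 = 0 ∧
      ∀ m : Matrix (Fin d) (Fin d) ℝ, m.IsSymm → frob m = 1 →
        (volume (ball z r))⁻¹ *
            ∫⁻ x in ball z r,
              ⨆ (τ : ℝ) (_ : 0 < τ), ENNReal.ofReal (τ⁻¹ * |F (τ • m) x - Fb (τ • m)|)
          ≤ ENNReal.ofReal θ

/-- The homogeneity bound `|F(ζ m, x)| ≤ ζ |F(m, x)| + K(x)` for `ζ ∈ [0,1]`. -/
def HomBound {d : ℕ} (F : Matrix (Fin d) (Fin d) ℝ → E d → ℝ) (K : E d → ℝ) : Prop :=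
  ∀ ζ ∈ Set.Icc (0 : ℝ) 1, ∀ m : Matrix (Fin d) (Fin d) ℝ, m.IsSymm → ∀ x : E d,
    |F (ζ • m) x| ≤ ζ * |F m x| + K x

/-!
For `y` in a convex domain `Ω` and two points `a, b ∈ Ω`, evaluate the first-order Taylor polynomial
of `u` at `y` at the contracted points `T_a y = y + τ (a - y)` and `T_b y`. The difference of the
two values is `τ Du(y) (a - b)`, while each value is `u (T_a y)` up to a remainder of size
`(τ diam Ω)² ∫₀¹ |D²u (T_{a,s} y)| ds`, where `T_{a,s}` is the contraction towards `a` with `τ`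
replaced by `s τ`. For `τ ≤ 1/2` these contractions map `Ω` into itself and balls onto balls of
radius at least half as large, so composing with them costs at most a factor `2^μ` in the Morrey
norm, and Minkowski's integral inequality handles the average over `s`. Letting `a - b` run through
an orthogonal frame of length comparable to the inradius of `Ω`, with `τ` a multiple of `ε`, yields
the estimate.
-/

open scoped ProbabilityTheory

section LpNorm

variable {X S : Type*} [MeasurableSpace X] [MeasurableSpace S] {p : ℝ≥0∞}

lemma lintegral_rpow_le_lintegral_rpow {P : Measure S} [IsProbabilityMeasure P] {f : S → ℝ≥0∞}
    (hf : Measurable f) {r : ℝ} (hr : 1 ≤ r) : (∫⁻ s, f s ∂P) ^ r ≤ ∫⁻ s, f s ^ r ∂P := by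
  have hr0 : 0 < r := zero_lt_one.trans_le hr
  have h := eLpNorm_le_eLpNorm_of_exponent_le (μ := P) (ENNReal.one_le_ofReal.2 hr)
    hf.aestronglyMeasurable
  rw [eLpNorm_one_eq_lintegral_enorm,
    eLpNorm_eq_lintegral_rpow_enorm_toReal (by simpa using hr0) ENNReal.ofReal_ne_top,
    ENNReal.toReal_ofReal hr0.le, one_div, ENNReal.le_rpow_inv_iff hr0] at h
  simpa only [enorm_eq_self] using h

lemma eLpNorm_lintegral_le {m : Measure X} [SFinite m] {P : Measure S} [IsProbabilityMeasure P]
    {F : X → S → ℝ≥0∞} (hF : Measurable (Function.uncurry F)) (hp : 1 ≤ p) (hp_top : p ≠ ∞)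
    {K : ℝ≥0∞} (hK : ∀ᵐ s ∂P, eLpNorm (F · s) p m ≤ K) :
    eLpNorm (fun x => ∫⁻ s, F x s ∂P) p m ≤ K := by
  have hp0 : p ≠ 0 := (zero_lt_one.trans_le hp).ne'
  have hr : 1 ≤ p.toReal := by simpa using ENNReal.toReal_mono hp_top hp
  simp only [eLpNorm_eq_lintegral_rpow_enorm_toReal hp0 hp_top, enorm_eq_self, one_div,
    ENNReal.rpow_inv_le_iff (zero_lt_one.trans_le hr)] at hK ⊢
  calc ∫⁻ x, (∫⁻ s, F x s ∂P) ^ p.toReal ∂m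
      ≤ ∫⁻ x, ∫⁻ s, F x s ^ p.toReal ∂P ∂m := by
        gcongr with x
        exact lintegral_rpow_le_lintegral_rpow hF.of_uncurry_left hr
    _ = ∫⁻ s, ∫⁻ x, F x s ^ p.toReal ∂m ∂P :=
        lintegral_lintegral_swap (hF.pow_const _).aemeasurable
    _ ≤ ∫⁻ _, K ^ p.toReal ∂P := lintegral_mono_ae hK
    _ = K ^ p.toReal := by simp

end LpNorm

section MorreyENorm

variable {X : Type*} [PseudoMetricSpace X] [MeasurableSpace X]

/-- The Morrey norm `sup_{ρ > 0, x ∈ Ω} ρ^μ (⨍_{B_ρ(x)} G^p dν)^{1/p}` of a `[0, ∞]`-valued `G`,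
the average being encoded as integration against the conditional measure `ν[|B_ρ(x)]`.
`G` is not cut off outside `Ω`; `morrey` is recovered by inserting `Ω.indicator`
(see `morrey_eq_morreyNorm`). -/
def morreyENorm (ν : Measure X) (p : ℝ≥0∞) (μ : ℝ) (Ω : Set X) (G : X → ℝ≥0∞) : ℝ≥0∞ :=
  ⨆ (ρ : ℝ) (_ : 0 < ρ) (x : X) (_ : x ∈ Ω), ENNReal.ofReal (ρ ^ μ) * eLpNorm G p ν[|ball x ρ]

variable {ν : Measure X} {p : ℝ≥0∞} {μ : ℝ} {Ω : Set X} {F G : X → ℝ≥0∞}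

lemma morreyENorm_le_iff {K : ℝ≥0∞} :
    morreyENorm ν p μ Ω G ≤ K ↔
      ∀ ρ > 0, ∀ x ∈ Ω, ENNReal.ofReal (ρ ^ μ) * eLpNorm G p ν[|ball x ρ] ≤ K := by
  simp only [morreyENorm, iSup_le_iff]

lemma le_morreyENorm {ρ : ℝ} (hρ : 0 < ρ) {x : X} (hx : x ∈ Ω) :
    ENNReal.ofReal (ρ ^ μ) * eLpNorm G p ν[|ball x ρ] ≤ morreyENorm ν p μ Ω G :=
  morreyENorm_le_iff.1 le_rfl ρ hρ x hx

lemma morreyENorm_mono (h : F ≤ G) : morreyENorm ν p μ Ω F ≤ morreyENorm ν p μ Ω G := by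
  unfold morreyENorm
  gcongr with ρ _ x _
  exact eLpNorm_mono_enorm h

lemma morreyENorm_const_mul_le (c : ℝ≥0∞) (hG : Measurable G) :
    morreyENorm ν p μ Ω (fun x => c * G x) ≤ c * morreyENorm ν p μ Ω G := by
  refine morreyENorm_le_iff.2 fun ρ hρ x hx => ?_
  grw [eLpNorm_le_mul_eLpNorm_of_ae_le_mul'' p hG.aestronglyMeasurable (.of_forall fun _ => le_rfl),
    mul_left_comm, le_morreyENorm hρ hx]

lemma morreyENorm_add_le (hF : Measurable F) (hG : Measurable G) (hp : 1 ≤ p) :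
    morreyENorm ν p μ Ω (F + G) ≤ morreyENorm ν p μ Ω F + morreyENorm ν p μ Ω G := by
  refine morreyENorm_le_iff.2 fun ρ hρ x hx => ?_
  grw [eLpNorm_add_le hF.aestronglyMeasurable hG.aestronglyMeasurable hp, mul_add,
    le_morreyENorm hρ hx, le_morreyENorm hρ hx]

lemma morreyENorm_sum_le {ι : Type*} {s : Finset ι} {F : ι → X → ℝ≥0∞}
    (hF : ∀ i ∈ s, Measurable (F i)) (hp : 1 ≤ p) :
    morreyENorm ν p μ Ω (∑ i ∈ s, F i) ≤ ∑ i ∈ s, morreyENorm ν p μ Ω (F i) := by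
  refine morreyENorm_le_iff.2 fun ρ hρ x hx => ?_
  grw [eLpNorm_sum_le (fun i hi => (hF i hi).aestronglyMeasurable) hp, Finset.mul_sum]
  gcongr with i
  exact le_morreyENorm hρ hx

lemma morreyENorm_lintegral_le {S : Type*} [MeasurableSpace S] {P : Measure S}
    [IsProbabilityMeasure P] [SFinite ν] {F : X → S → ℝ≥0∞} (hF : Measurable (Function.uncurry F))
    (hp : 1 ≤ p) (hp_top : p ≠ ∞) {K : ℝ≥0∞}
    (hK : ∀ᵐ s ∂P, morreyENorm ν p μ Ω (F · s) ≤ K) :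
    morreyENorm ν p μ Ω (fun x => ∫⁻ s, F x s ∂P) ≤ K := by
  refine morreyENorm_le_iff.2 fun ρ hρ x hx => ?_
  have hρμ : ENNReal.ofReal (ρ ^ μ) ≠ 0 := by simpa using Real.rpow_pos_of_pos hρ μ
  rw [mul_comm, ← ENNReal.le_div_iff_mul_le (.inl hρμ) (.inl ENNReal.ofReal_ne_top)]
  refine eLpNorm_lintegral_le hF hp hp_top (hK.mono fun s hs => ?_)
  rw [ENNReal.le_div_iff_mul_le (.inl hρμ) (.inl ENNReal.ofReal_ne_top), mul_comm]
  exact (le_morreyENorm hρ hx).trans hs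

end MorreyENorm

section Homothety

variable {V : Type*} [NormedAddCommGroup V] [NormedSpace ℝ V]

lemma homothety_image_ball {c : ℝ} (hc : 0 < c) (z x : V) (ρ : ℝ) :
    AffineMap.homothety z c '' ball x ρ = ball (AffineMap.homothety z c x) (c * ρ) := by
  have h_apply (y : V) : AffineMap.homothety z c y = (z - c • z) +ᵥ c • y := by
    simp only [AffineMap.homothety_apply, vsub_eq_sub, vadd_eq_add]
    module
  simp only [funext h_apply, ← image_image (fun y : V => (z - c • z) +ᵥ y) (fun y => c • y),
    image_smul, image_vadd, _root_.smul_ball hc.ne', vadd_ball, Real.norm_of_nonneg hc.le]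

lemma measurable_comp_lineMap_mul [MeasurableSpace V] [BorelSpace V]
    [SecondCountableTopology V] {G : V → ℝ≥0∞}
    (hG : Measurable G) (z : V) (τ : ℝ) :
    Measurable fun q : V × ℝ => G (AffineMap.lineMap q.1 z (q.2 * τ)) :=
  hG.comp (continuous_fst.lineMap continuous_const (by fun_prop)).measurable

variable [FiniteDimensional ℝ V] [MeasurableSpace V] [BorelSpace V] {ν : Measure V}
  [ν.IsAddHaarMeasure] {p : ℝ≥0∞} {μ : ℝ} {Ω : Set V} {G : V → ℝ≥0∞}

lemma map_homothety_cond (z : V) {c : ℝ} (hc : c ≠ 0) (s : Set V) :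
    ν[|s].map (AffineMap.homothety z c) = ν[|AffineMap.homothety z c '' s] := by
  have h_meas : Measurable (AffineMap.homothety z c) :=
    (AffineMap.homothety_continuous z c).measurable
  ext t ht
  rw [Measure.map_apply h_meas ht, ProbabilityTheory.cond_apply' (h_meas ht),
    ProbabilityTheory.cond_apply' ht, ← image_inter_preimage, Measure.addHaar_image_homothety,
    Measure.addHaar_image_homothety]
  have hk : ENNReal.ofReal |c ^ Module.finrank ℝ V| ≠ 0 := by simpa using pow_ne_zero _ hc
  rw [ENNReal.mul_inv (.inl hk) (.inl ENNReal.ofReal_ne_top), mul_mul_mul_comm,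
    ENNReal.inv_mul_cancel hk ENNReal.ofReal_ne_top, one_mul]

lemma morreyENorm_comp_homothety_le (hΩ : Convex ℝ Ω) (hμ : 0 ≤ μ) (hG : Measurable G) {z : V}
    (hz : z ∈ Ω) {c : ℝ} (hc : c ∈ Icc (1 / 2) 1) :
    morreyENorm ν p μ Ω (fun y => G (AffineMap.homothety z c y)) ≤
      ENNReal.ofReal (2 ^ μ) * morreyENorm ν p μ Ω G := by
  have hc0 : 0 < c := by linarith [hc.1]
  refine morreyENorm_le_iff.2 fun ρ hρ x hx => ?_
  have h_mem : AffineMap.homothety z c x ∈ Ω := by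
    rw [AffineMap.homothety_eq_lineMap]
    exact hΩ.lineMap_mem hz hx ⟨hc0.le, hc.2⟩
  have h_scale : ρ ^ μ ≤ 2 ^ μ * (c * ρ) ^ μ := by
    rw [← Real.mul_rpow zero_le_two (by positivity)]
    gcongr
    nlinarith [hc.1]
  calc ENNReal.ofReal (ρ ^ μ) * eLpNorm (G ∘ AffineMap.homothety z c) p ν[|ball x ρ]
      = ENNReal.ofReal (ρ ^ μ) *
          eLpNorm G p ν[|ball (AffineMap.homothety z c x) (c * ρ)] := by
        rw [← homothety_image_ball hc0, ← map_homothety_cond z hc0.ne',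
          eLpNorm_map_measure hG.aestronglyMeasurable
            (AffineMap.homothety_continuous z c).aemeasurable]
    _ ≤ ENNReal.ofReal (2 ^ μ) * (ENNReal.ofReal ((c * ρ) ^ μ) *
          eLpNorm G p ν[|ball (AffineMap.homothety z c x) (c * ρ)]) := by
        rw [← mul_assoc, ← ENNReal.ofReal_mul (by positivity)]
        gcongr
    _ ≤ ENNReal.ofReal (2 ^ μ) * morreyENorm ν p μ Ω G := by
        gcongr
        exact le_morreyENorm (by positivity) h_mem

lemma morreyENorm_comp_lineMap_le (hΩ : Convex ℝ Ω) (hμ : 0 ≤ μ) (hG : Measurable G) {z : V}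
    (hz : z ∈ Ω) {t : ℝ} (ht : t ∈ Icc 0 (1 / 2)) :
    morreyENorm ν p μ Ω (fun y => G (AffineMap.lineMap y z t)) ≤
      ENNReal.ofReal (2 ^ μ) * morreyENorm ν p μ Ω G := by
  convert morreyENorm_comp_homothety_le (ν := ν) (c := 1 - t) hΩ hμ hG hz
    ⟨by linarith [ht.2], by linarith [ht.1]⟩ using 3 with y
  rw [AffineMap.homothety_eq_lineMap, AffineMap.lineMap_apply_one_sub]

lemma morreyENorm_lintegral_comp_lineMap_le (hΩ : Convex ℝ Ω) (hμ : 0 ≤ μ) (hG : Measurable G)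
    (hp : 1 ≤ p) (hp_top : p ≠ ∞) {z : V} (hz : z ∈ Ω) {τ : ℝ} (hτ : τ ∈ Icc 0 (1 / 2)) :
    morreyENorm ν p μ Ω (fun y => ∫⁻ s in Icc (0 : ℝ) 1, G (AffineMap.lineMap y z (s * τ))) ≤
      ENNReal.ofReal (2 ^ μ) * morreyENorm ν p μ Ω G := by
  have : IsProbabilityMeasure (volume.restrict (Icc (0 : ℝ) 1)) := ⟨by simp⟩
  refine morreyENorm_lintegral_le (measurable_comp_lineMap_mul hG z τ) hp hp_top ?_
  filter_upwards [ae_restrict_mem measurableSet_Icc] with s hs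
  exact morreyENorm_comp_lineMap_le hΩ hμ hG hz
    ⟨mul_nonneg hs.1 hτ.1, (mul_le_of_le_one_left hτ.1 hs.2).trans hτ.2⟩

end Homothety

section Taylor

variable {V F : Type*} [NormedAddCommGroup V] [NormedSpace ℝ V] [NormedAddCommGroup F]
  [NormedSpace ℝ F] {Ω : Set V} {y w : V}

lemma enorm_lineMap_sub_le_lintegral_fderiv (hΩo : IsOpen Ω) (hΩc : Convex ℝ Ω) {f : V → F}
    (hf : ContDiffOn ℝ 1 f Ω) (hy : y ∈ Ω) (hw : w ∈ Ω) {t : ℝ} (ht : t ∈ Icc 0 1) :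
    ‖f (AffineMap.lineMap y w t) - f y‖ₑ ≤
      ‖w - y‖ₑ * ∫⁻ s in Icc 0 t, ‖fderiv ℝ f (AffineMap.lineMap y w s)‖ₑ := by
  have h_mem : ∀ s ∈ Icc 0 t, AffineMap.lineMap y w s ∈ Ω := fun s hs =>
    hΩc.lineMap_mem hy hw ⟨hs.1, hs.2.trans ht.2⟩
  have h_deriv : ∀ s ∈ Icc 0 t, deriv (f ∘ AffineMap.lineMap y w) s =
      fderiv ℝ f (AffineMap.lineMap y w s) (w - y) := fun s hs =>
    (((hf.differentiableOn one_ne_zero).differentiableAt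
      (hΩo.mem_nhds (h_mem s hs))).hasFDerivAt.comp_hasDerivAt s
        AffineMap.hasDerivAt_lineMap).deriv
  calc ‖f (AffineMap.lineMap y w t) - f y‖ₑ
      = ‖(f ∘ AffineMap.lineMap y w) t - (f ∘ AffineMap.lineMap y w) (0 : ℝ)‖ₑ := by simp
    _ ≤ ∫⁻ s in Icc 0 t, ‖deriv (f ∘ AffineMap.lineMap y w) s‖ₑ :=
        enorm_sub_le_lintegral_deriv_of_contDiffOn_Icc
          (hf.comp (AffineMap.contDiff_lineMap y w).contDiffOn h_mem) ht.1
    _ ≤ ∫⁻ s in Icc 0 t, ‖w - y‖ₑ * ‖fderiv ℝ f (AffineMap.lineMap y w s)‖ₑ :=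
        setLIntegral_mono' measurableSet_Icc fun s hs => by
          rw [h_deriv s hs, mul_comm]
          exact ContinuousLinearMap.le_opENorm _ _
    _ = ‖w - y‖ₑ * ∫⁻ s in Icc 0 t, ‖fderiv ℝ f (AffineMap.lineMap y w s)‖ₑ :=
        lintegral_const_mul' _ _ enorm_ne_top

lemma enorm_sub_sub_fderiv_le_lintegral (hΩo : IsOpen Ω) (hΩc : Convex ℝ Ω) {u : V → F}
    (hu : ContDiffOn ℝ 2 u Ω) (hy : y ∈ Ω) (hw : w ∈ Ω) :
    ‖u w - u y - fderiv ℝ u y (w - y)‖ₑ ≤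
      ‖w - y‖ₑ ^ 2 * ∫⁻ s in Icc (0 : ℝ) 1, ‖fderiv ℝ (fderiv ℝ u) (AffineMap.lineMap y w s)‖ₑ := by
  let g : V → F := fun x => u x - fderiv ℝ u y x
  set I := ∫⁻ s in Icc (0 : ℝ) 1, ‖fderiv ℝ (fderiv ℝ u) (AffineMap.lineMap y w s)‖ₑ
  have hu' : ContDiffOn ℝ 1 (fderiv ℝ u) Ω := hu.fderiv_of_isOpen hΩo (by norm_num)
  have h_fderiv : ∀ s ∈ Icc (0 : ℝ) 1, ‖fderiv ℝ g (AffineMap.lineMap y w s)‖ₑ ≤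
      ‖w - y‖ₑ * I := fun s hs => by
    have h_diff : DifferentiableAt ℝ u (AffineMap.lineMap y w s) :=
      (hu.differentiableOn two_ne_zero).differentiableAt
        (hΩo.mem_nhds (hΩc.lineMap_mem hy hw hs))
    rw [fderiv_fun_sub h_diff (fderiv ℝ u y).differentiableAt, ContinuousLinearMap.fderiv]
    grw [enorm_lineMap_sub_le_lintegral_fderiv hΩo hΩc hu' hy hw hs]
    gcongr
    exact lintegral_mono_set (Icc_subset_Icc_right hs.2)
  have h_mvt := enorm_lineMap_sub_le_lintegral_fderiv hΩo hΩc (f := g)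
    ((hu.of_le one_le_two).sub (fderiv ℝ u y).contDiff.contDiffOn) hy hw
    (right_mem_Icc.2 zero_le_one)
  calc ‖u w - u y - fderiv ℝ u y (w - y)‖ₑ
      = ‖g (AffineMap.lineMap y w (1 : ℝ)) - g y‖ₑ := by
        simp only [g, AffineMap.lineMap_apply_one, map_sub]
        congr 1
        abel
    _ ≤ ‖w - y‖ₑ * ∫⁻ _ in Icc (0 : ℝ) 1, ‖w - y‖ₑ * I := by
        grw [h_mvt, setLIntegral_mono' measurableSet_Icc h_fderiv]
    _ = ‖w - y‖ₑ ^ 2 * I := by simp [sq, mul_assoc]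

lemma enorm_add_fderiv_smul_le (hΩo : IsOpen Ω) (hΩc : Convex ℝ Ω) {u : V → F}
    (hu : ContDiffOn ℝ 2 u Ω) (hy : y ∈ Ω) {a : V} (ha : a ∈ Ω) {τ : ℝ} (hτ : τ ∈ Icc 0 1) :
    ‖u y + fderiv ℝ u y (τ • (a - y))‖ₑ ≤ ‖u (AffineMap.lineMap y a τ)‖ₑ +
      (ENNReal.ofReal τ * ediam Ω) ^ 2 *
        ∫⁻ s in Icc (0 : ℝ) 1, ‖fderiv ℝ (fderiv ℝ u) (AffineMap.lineMap y a (s * τ))‖ₑ := by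
  have h_sub : AffineMap.lineMap y a τ - y = τ • (a - y) := by
    simp [AffineMap.lineMap_apply]
  have h_taylor := enorm_sub_sub_fderiv_le_lintegral hΩo hΩc hu hy (hΩc.lineMap_mem hy ha hτ)
  simp only [h_sub, AffineMap.lineMap_lineMap_right] at h_taylor
  calc ‖u y + fderiv ℝ u y (τ • (a - y))‖ₑ
      = ‖u (AffineMap.lineMap y a τ) -
          (u (AffineMap.lineMap y a τ) - u y - fderiv ℝ u y (τ • (a - y)))‖ₑ := by
        congr 1
        abel
    _ ≤ _ := by
        grw [enorm_sub_le, h_taylor, enorm_smul, ← edist_eq_enorm_sub,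
          edist_le_ediam_of_mem ha hy, Real.enorm_of_nonneg hτ.1]

lemma indicator_enorm_add_fderiv_smul_le (hΩo : IsOpen Ω) (hΩc : Convex ℝ Ω) {u : V → F}
    (hu : ContDiffOn ℝ 2 u Ω) {a : V} (ha : a ∈ Ω) {τ : ℝ} (hτ : τ ∈ Icc 0 1) :
    (Ω.indicator fun y => ‖u y + fderiv ℝ u y (τ • (a - y))‖ₑ) ≤ fun y =>
      Ω.indicator (fun x => ‖u x‖ₑ) (AffineMap.lineMap y a τ) + (ENNReal.ofReal τ * ediam Ω) ^ 2 *
        ∫⁻ s in Icc (0 : ℝ) 1, Ω.indicator (fun x => ‖fderiv ℝ (fderiv ℝ u) x‖ₑ)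
          (AffineMap.lineMap y a (s * τ)) := by
  refine indicator_le fun y hy => ?_
  have h_mem {t : ℝ} (ht : t ∈ Icc (0 : ℝ) 1) : AffineMap.lineMap y a t ∈ Ω :=
    hΩc.lineMap_mem hy ha ht
  rw [indicator_of_mem (h_mem hτ), setLIntegral_congr_fun measurableSet_Icc fun s hs =>
    indicator_of_mem (h_mem (unitInterval.mul_mem hs hτ)) _]
  exact enorm_add_fderiv_smul_le hΩo hΩc hu hy ha hτ

end Taylor

section MorreyNorm

variable {X F : Type*} [PseudoMetricSpace X] [MeasurableSpace X] [NormedAddCommGroup F]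

/-- The Morrey norm on `Ω` of a vector-valued function `g`, which is cut off outside `Ω`. -/
def morreyNorm (ν : Measure X) (p : ℝ≥0∞) (μ : ℝ) (Ω : Set X) (g : X → F) : ℝ≥0∞ :=
  morreyENorm ν p μ Ω (Ω.indicator fun x => ‖g x‖ₑ)

variable {ν : Measure X} {p : ℝ≥0∞} {μ : ℝ} {Ω : Set X}

lemma morreyNorm_mono {F' : Type*} [NormedAddCommGroup F'] {g : X → F} {h : X → F'}
    (hgh : ∀ x ∈ Ω, ‖g x‖ₑ ≤ ‖h x‖ₑ) : morreyNorm ν p μ Ω g ≤ morreyNorm ν p μ Ω h :=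
  morreyENorm_mono <| indicator_le fun x hx => by
    simpa only [indicator_of_mem hx] using hgh x hx

variable [OpensMeasurableSpace X]

lemma measurable_indicator_enorm {g : X → F} (hg : ContinuousOn g Ω)
    (hΩ : MeasurableSet Ω) : Measurable (Ω.indicator fun x => ‖g x‖ₑ) := by
  classical
  rw [← piecewise_eq_indicator]
  exact hg.enorm.measurable_piecewise continuousOn_const hΩ

lemma morreyNorm_sub_le {g h : X → F} (hΩ : MeasurableSet Ω) (hg : ContinuousOn g Ω)
    (hh : ContinuousOn h Ω) (hp : 1 ≤ p) :
    morreyNorm ν p μ Ω (fun x => g x - h x) ≤ morreyNorm ν p μ Ω g + morreyNorm ν p μ Ω h := by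
  refine le_trans (morreyENorm_mono ?_) (morreyENorm_add_le (measurable_indicator_enorm hg hΩ)
    (measurable_indicator_enorm hh hΩ) hp)
  refine indicator_le fun x hx => ?_
  simpa only [Pi.add_apply, indicator_of_mem hx] using enorm_sub_le

end MorreyNorm

section Interpolation

variable {V F : Type*} [NormedAddCommGroup V] [NormedSpace ℝ V] [FiniteDimensional ℝ V]
  [MeasurableSpace V] [BorelSpace V] [NormedAddCommGroup F] [NormedSpace ℝ F]
  {ν : Measure V} [ν.IsAddHaarMeasure] {p : ℝ≥0∞} {μ : ℝ} {Ω : Set V} {u : V → F} {τ : ℝ}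

lemma morreyNorm_add_fderiv_smul_le (hp : 1 ≤ p) (hp_top : p ≠ ∞) (hμ : 0 ≤ μ) (hΩo : IsOpen Ω)
    (hΩc : Convex ℝ Ω) (hu : ContDiffOn ℝ 2 u Ω) {a : V} (ha : a ∈ Ω) (hτ : τ ∈ Icc 0 (1 / 2)) :
    morreyNorm ν p μ Ω (fun y => u y + fderiv ℝ u y (τ • (a - y))) ≤
      ENNReal.ofReal (2 ^ μ) * (morreyNorm ν p μ Ω u +
        (ENNReal.ofReal τ * ediam Ω) ^ 2 * morreyNorm ν p μ Ω (fderiv ℝ (fderiv ℝ u))) := by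
  set U : V → ℝ≥0∞ := Ω.indicator fun y => ‖u y‖ₑ
  set H : V → ℝ≥0∞ := Ω.indicator fun y => ‖fderiv ℝ (fderiv ℝ u) y‖ₑ
  have hu' : ContDiffOn ℝ 1 (fderiv ℝ u) Ω := hu.fderiv_of_isOpen hΩo (by norm_num)
  have hU : Measurable U := measurable_indicator_enorm hu.continuousOn hΩo.measurableSet
  have hH : Measurable H :=
    measurable_indicator_enorm (hu'.continuousOn_fderiv_of_isOpen hΩo le_rfl) hΩo.measurableSet
  have hU_meas : Measurable fun y => U (AffineMap.lineMap y a τ) :=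
    hU.comp (continuous_id.lineMap continuous_const continuous_const).measurable
  have hH_meas : Measurable fun y => ∫⁻ s in Icc (0 : ℝ) 1, H (AffineMap.lineMap y a (s * τ)) :=
    (measurable_comp_lineMap_mul hH a τ).lintegral_prod_right'
  have hU_le : morreyENorm ν p μ Ω (fun y => U (AffineMap.lineMap y a τ)) ≤
      ENNReal.ofReal (2 ^ μ) * morreyNorm ν p μ Ω u :=
    morreyENorm_comp_lineMap_le hΩc hμ hU ha hτ
  have hH_le : morreyENorm ν p μ Ω
      (fun y => ∫⁻ s in Icc (0 : ℝ) 1, H (AffineMap.lineMap y a (s * τ))) ≤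
      ENNReal.ofReal (2 ^ μ) * morreyNorm ν p μ Ω (fderiv ℝ (fderiv ℝ u)) :=
    morreyENorm_lintegral_comp_lineMap_le hΩc hμ hH hp hp_top ha hτ
  refine (morreyENorm_mono (indicator_enorm_add_fderiv_smul_le hΩo hΩc hu ha
    ⟨hτ.1, by linarith [hτ.2]⟩)).trans ?_
  refine (morreyENorm_add_le hU_meas (hH_meas.const_mul _) hp).trans ?_
  grw [morreyENorm_const_mul_le _ hH_meas, hU_le, hH_le, mul_left_comm, mul_add]

lemma morreyNorm_fderiv_smul_sub_le (hp : 1 ≤ p) (hp_top : p ≠ ∞) (hμ : 0 ≤ μ) (hΩo : IsOpen Ω)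
    (hΩc : Convex ℝ Ω) (hu : ContDiffOn ℝ 2 u Ω) {a b : V} (ha : a ∈ Ω) (hb : b ∈ Ω)
    (hτ : τ ∈ Icc 0 (1 / 2)) :
    morreyNorm ν p μ Ω (fun y => fderiv ℝ u y (τ • (a - b))) ≤
      2 * (ENNReal.ofReal (2 ^ μ) * (morreyNorm ν p μ Ω u +
        (ENNReal.ofReal τ * ediam Ω) ^ 2 * morreyNorm ν p μ Ω (fderiv ℝ (fderiv ℝ u)))) := by
  have h_cont (a : V) : ContinuousOn (fun y => u y + fderiv ℝ u y (τ • (a - y))) Ω :=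
    hu.continuousOn.add ((hu.continuousOn_fderiv_of_isOpen hΩo one_le_two).clm_apply (by fun_prop))
  have h_eq (y : V) : fderiv ℝ u y (τ • (a - b)) =
      (u y + fderiv ℝ u y (τ • (a - y))) - (u y + fderiv ℝ u y (τ • (b - y))) := by
    rw [add_sub_add_left_eq_sub, ← map_sub, ← smul_sub, sub_sub_sub_cancel_right]
  simp only [h_eq]
  grw [morreyNorm_sub_le hΩo.measurableSet (h_cont a) (h_cont b) hp,
    morreyNorm_add_fderiv_smul_le hp hp_top hμ hΩo hΩc hu ha hτ,
    morreyNorm_add_fderiv_smul_le hp hp_top hμ hΩo hΩc hu hb hτ, two_mul]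

end Interpolation

section Basis

variable {V F ι : Type*} [NormedAddCommGroup V] [InnerProductSpace ℝ V] [NormedAddCommGroup F]
  [NormedSpace ℝ F] [Fintype ι] {p : ℝ≥0∞} {μ : ℝ}

lemma opENorm_le_sum_enorm_apply (b : OrthonormalBasis ι ℝ V) (f : V →L[ℝ] F) :
    ‖f‖ₑ ≤ ∑ i, ‖f (b i)‖ₑ := by
  have h_norm : ‖f‖ ≤ ∑ i, ‖f (b i)‖ := by
    refine f.opNorm_le_bound (by positivity) fun v => ?_
    calc ‖f v‖ = ‖∑ i, ⟪b i, v⟫ • f (b i)‖ := by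
          conv_lhs => rw [← b.sum_repr' v]
          simp only [map_sum, map_smul]
      _ ≤ ∑ i, ‖v‖ * ‖f (b i)‖ := by
          refine norm_sum_le_of_le _ fun i _ => ?_
          rw [norm_smul]
          gcongr
          simpa using norm_inner_le_norm (𝕜 := ℝ) (b i) v
      _ = (∑ i, ‖f (b i)‖) * ‖v‖ := by rw [← Finset.mul_sum, mul_comm]
  simp only [← ofReal_norm]
  rw [← ENNReal.ofReal_sum_of_nonneg fun i _ => norm_nonneg _]
  exact ENNReal.ofReal_le_ofReal h_norm

lemma morreyNorm_clm_le_sum {X : Type*} [PseudoMetricSpace X] [MeasurableSpace X]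
    [OpensMeasurableSpace X] {ν : Measure X} {Ω : Set X} (hp : 1 ≤ p) (hΩ : MeasurableSet Ω)
    {A : X → V →L[ℝ] F} (hA : ContinuousOn A Ω) (b : OrthonormalBasis ι ℝ V) {c : ℝ} (hc : c ≠ 0) :
    morreyNorm ν p μ Ω A ≤ ‖c⁻¹‖ₑ * ∑ i, morreyNorm ν p μ Ω (fun x => A x (c • b i)) := by
  have h_meas (i) : Measurable (Ω.indicator fun x => ‖A x (c • b i)‖ₑ) :=
    measurable_indicator_enorm (hA.clm_apply continuousOn_const) hΩ
  set G := ∑ i, Ω.indicator fun x => ‖A x (c • b i)‖ₑ with hG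
  have hG_meas : Measurable G := by
    simpa only [hG, ← Finset.sum_apply] using Finset.measurable_sum _ fun i _ => h_meas i
  have h_unscale (x : X) (i) : ‖c⁻¹‖ₑ * ‖A x (c • b i)‖ₑ = ‖A x (b i)‖ₑ := by
    rw [← enorm_smul, ← map_smul, inv_smul_smul₀ hc]
  have h_pointwise : (Ω.indicator fun x => ‖A x‖ₑ) ≤ fun x => ‖c⁻¹‖ₑ * G x := by
    refine indicator_le fun x hx => ?_
    simpa only [hG, Finset.sum_apply, indicator_of_mem hx, Finset.mul_sum, h_unscale] using
      opENorm_le_sum_enorm_apply b (A x)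
  refine (morreyENorm_mono h_pointwise).trans ((morreyENorm_const_mul_le _ hG_meas).trans ?_)
  gcongr
  exact morreyENorm_sum_le (fun i _ => h_meas i) hp

lemma morreyNorm_fderiv_le [FiniteDimensional ℝ V] [MeasurableSpace V] [BorelSpace V]
    {ν : Measure V} [ν.IsAddHaarMeasure] {Ω : Set V} {u : V → F} {τ : ℝ} (hp : 1 ≤ p)
    (hp_top : p ≠ ∞) (hμ : 0 ≤ μ) (hΩo : IsOpen Ω) (hΩc : Convex ℝ Ω) {z : V} {r : ℝ} (hr : 0 < r)
    (hzr : ball z r ⊆ Ω) (hu : ContDiffOn ℝ 2 u Ω) (hτ : τ ∈ Ioc 0 (1 / 2)) :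
    morreyNorm ν p μ Ω (fderiv ℝ u) ≤ ENNReal.ofReal (2 / (τ * r)) * (Module.finrank ℝ V *
      (2 * (ENNReal.ofReal (2 ^ μ) * (morreyNorm ν p μ Ω u +
        (ENNReal.ofReal τ * ediam Ω) ^ 2 * morreyNorm ν p μ Ω (fderiv ℝ (fderiv ℝ u)))))) := by
  let b := stdOrthonormalBasis ℝ V
  have hc : 0 < τ * r / 2 := by have := hτ.1; positivity
  have h_mem (i) : z + (r / 2) • b i ∈ Ω := hzr <| by
    simp [norm_smul, b.orthonormal.1 i, abs_of_pos hr, hr]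
  have h_eq (i) : (τ * r / 2) • b i = τ • (z + (r / 2) • b i - z) := by
    rw [add_sub_cancel_left, smul_smul, mul_div_assoc]
  have h_dir (i) := morreyNorm_fderiv_smul_sub_le (ν := ν) hp hp_top hμ hΩo hΩc hu (h_mem i)
    (hzr (mem_ball_self hr)) ⟨hτ.1.le, hτ.2⟩
  calc morreyNorm ν p μ Ω (fderiv ℝ u)
      ≤ ‖(τ * r / 2)⁻¹‖ₑ *
          ∑ i, morreyNorm ν p μ Ω (fun y => fderiv ℝ u y ((τ * r / 2) • b i)) :=
        morreyNorm_clm_le_sum hp hΩo.measurableSet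
          (hu.continuousOn_fderiv_of_isOpen hΩo one_le_two) b hc.ne'
    _ ≤ _ := by
        rw [Real.enorm_of_nonneg (by positivity), inv_div]
        simp only [h_eq]
        gcongr
        refine (Finset.sum_le_card_nsmul _ _ _ fun i _ => h_dir i).trans_eq ?_
        rw [Finset.card_univ, Fintype.card_fin, nsmul_eq_mul]

end Basis

section Euclidean

variable {d : ℕ} {p μ : ℝ} {Ω : Set (E d)} {u : E d → ℝ}

lemma nLp_eq_eLpNorm (hp : 0 < p) (B : Set (E d)) (g : E d → ℝ) :
    nLp p B g = eLpNorm g (ENNReal.ofReal p) volume[|B] := by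
  rw [eLpNorm_eq_lintegral_rpow_enorm_toReal (by simpa using hp) ENNReal.ofReal_ne_top,
    ENNReal.toReal_ofReal hp.le, ProbabilityTheory.cond, lintegral_smul_measure, smul_eq_mul]
  simp only [nLp, Real.enorm_eq_ofReal_abs, ENNReal.ofReal_rpow_of_nonneg (abs_nonneg _) hp.le]

lemma morrey_eq_morreyNorm (hp : 0 < p) (g : E d → ℝ) :
    morrey p μ Ω g = morreyNorm volume (ENNReal.ofReal p) μ Ω g := by
  have h_norm : (Ω.indicator fun x => ‖g x‖ₑ) = fun x => ‖Ω.indicator g x‖ₑ :=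
    funext fun x => (enorm_indicator_eq_indicator_enorm g x).symm
  simp only [morrey, morreyNorm, morreyENorm, nLp_eq_eLpNorm hp, h_norm, eLpNorm_enorm]

lemma hess_apply {x : E d} (hu : DifferentiableAt ℝ (fderiv ℝ u) x) (i j : Fin d) :
    hess u x i j =
      fderiv ℝ (fderiv ℝ u) x (EuclideanSpace.single i 1) (EuclideanSpace.single j 1) := by
  simp only [hess, Matrix.of_apply]
  rw [fderiv_clm_apply hu (differentiableAt_const _)]
  simp

lemma norm_fderiv_fderiv_le_frob_hess {x : E d} (hu : DifferentiableAt ℝ (fderiv ℝ u) x) :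
    ‖fderiv ℝ (fderiv ℝ u) x‖ ≤ frob (hess u x) := by
  refine ContinuousLinearMap.opNorm_le_bound₂ _ (Real.sqrt_nonneg _) fun v w => ?_
  have h_expand (v : E d) : v = ∑ i, v i • EuclideanSpace.single i (1 : ℝ) := by
    simpa using ((EuclideanSpace.basisFun (Fin d) ℝ).sum_repr v).symm
  have h_apply : fderiv ℝ (fderiv ℝ u) x v w = ∑ ij : Fin d × Fin d,
      hess u x ij.1 ij.2 * (v ij.1 * w ij.2) := by
    conv_lhs => rw [h_expand v, h_expand w]
    simp only [map_sum, map_smul, sum_apply, smul_apply,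
      ← hess_apply hu, smul_eq_mul, Fintype.sum_prod_type, Finset.mul_sum]
    rw [Finset.sum_comm]
    refine Finset.sum_congr rfl fun i _ => Finset.sum_congr rfl fun j _ => ?_
    ring
  have h_norm : ‖v‖ * ‖w‖ = √(∑ ij : Fin d × Fin d, (v ij.1 * w ij.2) ^ 2) := by
    simp only [EuclideanSpace.norm_eq, Real.norm_eq_abs, sq_abs, mul_pow, Fintype.sum_prod_type,
      ← Finset.mul_sum, ← Finset.sum_mul]
    rw [Real.sqrt_mul (by positivity)]
  rw [h_apply, mul_assoc, h_norm, frob, ← Fintype.sum_prod_type', Real.norm_eq_abs,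
    ← Real.sqrt_mul (by positivity)]
  exact Real.abs_le_sqrt (Finset.sum_mul_sq_le_sq_mul_sq _ _ _)

lemma morrey_norm_fderiv_le (hp : 1 ≤ p) (hμ : 0 ≤ μ) (hΩo : IsOpen Ω) (hΩc : Convex ℝ Ω)
    {z : E d} {r : ℝ} (hr : 0 < r) (hzr : ball z r ⊆ Ω) (hu : ContDiffOn ℝ 2 u Ω) {τ : ℝ}
    (hτ : τ ∈ Ioc 0 (1 / 2)) :
    morrey p μ Ω (fun x => ‖fderiv ℝ u x‖) ≤ ENNReal.ofReal (2 / (τ * r)) * (d *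
      (2 * (ENNReal.ofReal (2 ^ μ) * (morrey p μ Ω u +
        (ENNReal.ofReal τ * ediam Ω) ^ 2 * morrey p μ Ω (fun x => frob (hess u x)))))) := by
  simp only [morrey_eq_morreyNorm (zero_lt_one.trans_le hp)]
  have h_hess : morreyNorm volume (ENNReal.ofReal p) μ Ω (fderiv ℝ (fderiv ℝ u)) ≤
      morreyNorm volume (ENNReal.ofReal p) μ Ω (fun x => frob (hess u x)) :=
    morreyNorm_mono fun x hx => enorm_le_iff_norm_le.2 <|
      (norm_fderiv_fderiv_le_frob_hess (((hu.fderiv_of_isOpen hΩo (by norm_num)).differentiableOn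
        one_ne_zero).differentiableAt (hΩo.mem_nhds hx))).trans (le_abs_self _)
  refine (morreyNorm_mono (h := fderiv ℝ u) fun x _ => (enorm_norm _).le).trans ?_
  grw [morreyNorm_fderiv_le (ENNReal.one_le_ofReal.2 hp) ENNReal.ofReal_ne_top hμ hΩo hΩc hr hzr
    hu hτ, h_hess, finrank_euclideanSpace_fin]

end Euclidean

theorem stmt_8_general (d : ℕ) {p μ : ℝ} (hp : 1 ≤ p) (hμ : 0 ≤ μ) (κ : ℝ) :
    ∃ N : ℝ, 0 < N ∧ ∀ Ω : Set (E d), IsOpen Ω → Convex ℝ Ω →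
      ∀ (z : E d) (r : ℝ), 0 < r → ball z r ⊆ Ω → Ω ⊆ closedBall z (κ * r) →
        ∀ u : E d → ℝ, ContDiffOn ℝ 2 u Ω → ∀ ε ∈ Ioc (0 : ℝ) 1,
          morrey p μ Ω (fun x => ‖fderiv ℝ u x‖) ≤
            ENNReal.ofReal (N * ε * r) * morrey p μ Ω (fun x => frob (hess u x)) +
              ENNReal.ofReal (N * ε⁻¹ * r⁻¹) * morrey p μ Ω u := by
  refine ⟨8 * 2 ^ μ * (d + 1) * (κ ^ 2 + 1), by positivity,
    fun Ω hΩo hΩc z r hr hzr hΩr u hu ε hε => ?_⟩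
  have hε0 : 0 < ε := hε.1
  have hκr : 0 ≤ κ * r := dist_nonneg.trans (hΩr (hzr (mem_ball_self hr)))
  have h_diam : ediam Ω ≤ ENNReal.ofReal (2 * (κ * r)) := by
    grw [hΩr, ← closedEBall_ofReal hκr, ediam_closedEBall_le]
    rw [ENNReal.ofReal_mul zero_le_two, ENNReal.ofReal_ofNat]
  grw [morrey_norm_fderiv_le hp hμ hΩo hΩc hr hzr hu (τ := ε / 2)
    ⟨by linarith, by linarith [hε.2]⟩, h_diam]
  set H := morrey p μ Ω fun x => frob (hess u x)
  calc ENNReal.ofReal (2 / (ε / 2 * r)) * (d * (2 * (ENNReal.ofReal (2 ^ μ) * (morrey p μ Ω u +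
        (ENNReal.ofReal (ε / 2) * ENNReal.ofReal (2 * (κ * r))) ^ 2 * H))))
      = ENNReal.ofReal (2 / (ε / 2 * r) * (d * (2 * (2 ^ μ * (ε / 2 * (2 * (κ * r))) ^ 2)))) * H +
          ENNReal.ofReal (2 / (ε / 2 * r) * (d * (2 * 2 ^ μ))) * morrey p μ Ω u := by
        simp (discharger := positivity) only [ENNReal.ofReal_mul, ENNReal.ofReal_pow,
          ENNReal.ofReal_natCast, ENNReal.ofReal_ofNat]
        ring
    _ = ENNReal.ofReal (8 * 2 ^ μ * d * κ ^ 2 * ε * r) * H +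
          ENNReal.ofReal (8 * 2 ^ μ * d * 1 * ε⁻¹ * r⁻¹) * morrey p μ Ω u := by
        congr 3 <;> field_simp <;> ring
    _ ≤ _ := by
        gcongr ENNReal.ofReal ?_ * _ + ENNReal.ofReal ?_ * _
        · gcongr <;> nlinarith
        · gcongr <;> nlinarith

/-- Estimate (4.8) of the paper's Lemma 4.4: Morrey-norm interpolation inequality
for the gradient. -/
theorem stmt_8 (d : ℕ) (hd : 1 ≤ d) (p μ : ℝ)
    (hp : 1 < p) (hμ : 0 < μ) (hμd : μ ≤ (d : ℝ) / p) :
    ∃ N : ℝ, 0 < N ∧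
      ∀ R : ℝ, 0 < R →
        ∀ u : E d → ℝ, ContDiffOn ℝ 2 u (closedBall (0 : E d) R) →
          ∀ ε ∈ Set.Ioc (0 : ℝ) 1,
            morrey p μ (ball (0 : E d) R) (fun x => ‖fderiv ℝ u x‖) ≤
              ENNReal.ofReal (N * ε * R) *
                  morrey p μ (ball (0 : E d) R) (fun x => frob (hess u x)) +
                ENNReal.ofReal (N * ε⁻¹ * R⁻¹) * morrey p μ (ball (0 : E d) R) u := by
  obtain ⟨N, hN, h⟩ := stmt_8_general d hp.le hμ.le 1
  refine ⟨N, hN, fun R hR u hu ε hε => h (ball 0 R) isOpen_ball (convex_ball 0 R) 0 R hR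
    Subset.rfl ?_ u (hu.mono ball_subset_closedBall) ε hε⟩
  rw [one_mul]
  exact ball_subset_closedBall
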